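/- (Fujishige's optimality criterion) Let f : 2^E → ℕ be an integral polymatroid rank function, let C_e : ℕ×ℕ → ℝ≥0 (e ∈ E) be discrete convex in the first argument, let t ∈ ℕ^E and d ∈ ℕ. Then x* ∈ B_f(d) minimizes Σ_{e∈E} C_e(x_e;t_e) over B_f(d) if and only if for every e ∈ E with x*_e ≥ 1 and every g ∈ E∖{e} with x* + χ_g − χ_e ∈ B_f(d) one has C_e⁻(x*_e;t_e) ≤ C_g⁺(x*_g;t_g). -/

import Mathlib

open Finset

/-- Indicator vector of an element. -/
def chi {E : Type*} [DecidableEq E] (e : E) : E → ℕ := fun e' => if e' = e then 1 else 0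

/-- Integral polymatroid rank function: normalized, monotone, submodular. -/
def IsPolymatroidRank {E : Type*} [Fintype E] [DecidableEq E] (f : Finset E → ℕ) : Prop :=
  f ∅ = 0 ∧ (∀ U V : Finset E, U ⊆ V → f U ≤ f V) ∧
    (∀ U V : Finset E, f (U ∪ V) + f (U ∩ V) ≤ f U + f V)

/-- The integral polymatroid base polytope `B_f(d)`. -/
def Base {E : Type*} [Fintype E] (f : Finset E → ℕ) (d : ℕ) : Set (E → ℕ) :=
  {x | (∀ U : Finset E, ∑ e ∈ U, x e ≤ f U) ∧ ∑ e, x e = d}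

/-- Regularity of a parametrized cost function: the left discrete derivative
`C⁻(x;t) = C(x;t) - C(x-1;t)` (for `x ≥ 1`) satisfies both
`C⁻(x;t) ≤ C⁻(x;t+1)` and `C⁻(x;t+1) ≤ C⁻(x+1;t)`. -/
def Regular (C : ℕ → ℕ → ℝ) : Prop :=
  ∀ x t : ℕ, 1 ≤ x →
    C x t - C (x - 1) t ≤ C x (t + 1) - C (x - 1) (t + 1) ∧
    C x (t + 1) - C (x - 1) (t + 1) ≤ C (x + 1) t - C x t

/-- The objective `Σ_{e ∈ E} C_e(x_e; t_e)` of problem `P(t,d)`. -/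
def totalCost {E : Type*} [Fintype E] (C : E → ℕ → ℕ → ℝ) (t : E → ℕ) (x : E → ℕ) : ℝ :=
  ∑ e, C e (x e) (t e)

/-- An optimal solution of `P(t,d)`: minimize `Σ_e C_e(x_e;t_e)` over `B_f(d)`. -/
def IsOptimal {E : Type*} [Fintype E] (f : Finset E → ℕ) (C : E → ℕ → ℕ → ℝ)
    (t : E → ℕ) (d : ℕ) (x : E → ℕ) : Prop :=
  x ∈ Base f d ∧ ∀ y ∈ Base f d, totalCost C t x ≤ totalCost C t y

/-- The `L1`-distance `‖u - v‖ = Σ_e |u_e - v_e|` of two vectors in `ℕ^E`. -/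
def l1 {E : Type*} [Fintype E] (u v : E → ℕ) : ℕ :=
  ∑ e, ((u e : ℤ) - (v e : ℤ)).natAbs

lemma sum_move {E : Type*} [DecidableEq E] (x : E → ℕ) (e g : E) (he : 1 ≤ x e) (hge : g ≠ e)
    (U : Finset E) :
    ∑ i ∈ U, (x + chi g - chi e) i + (if e ∈ U then 1 else 0)
      = ∑ i ∈ U, x i + (if g ∈ U then 1 else 0) := by
  have h1 : ∑ i ∈ U, (if i = e then 1 else 0) = (if e ∈ U then 1 else 0) := by
    simp
  have h2 : ∑ i ∈ U, (if i = g then 1 else 0) = (if g ∈ U then 1 else 0) := by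
    simp
  rw [← h1, ← h2, ← Finset.sum_add_distrib, ← Finset.sum_add_distrib]
  refine Finset.sum_congr rfl fun i _ => ?_
  simp only [Pi.sub_apply, Pi.add_apply, chi]
  by_cases hi : i = e
  · subst hi
    simp [hge.symm]
    omega
  · simp [hi]

lemma move_mem {E : Type*} [Fintype E] [DecidableEq E] (f : Finset E → ℕ) (d : ℕ) (x : E → ℕ)
    (hx : x ∈ Base f d) (e g : E) (he : 1 ≤ x e) (hge : g ≠ e)
    (h : ∀ U : Finset E, g ∈ U → e ∉ U → ∑ i ∈ U, x i ≠ f U) :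
    x + chi g - chi e ∈ Base f d := by
  refine ⟨fun U => ?_, ?_⟩
  · have h1 := sum_move x e g he hge U
    have h2 := hx.1 U
    have h3 := h U
    by_cases hgU : g ∈ U <;> by_cases heU : e ∈ U <;> simp only [hgU, heU, if_true, if_false] at h1
    · omega
    · have := h3 hgU heU
      omega
    · omega
    · omega
  · have h1 := sum_move x e g he hge Finset.univ
    have h2 := hx.2
    simp only [Finset.mem_univ, if_true] at h1
    omega

lemma tight_closed {E : Type*} [Fintype E] [DecidableEq E] (f : Finset E → ℕ) (d : ℕ)
    (hsub : ∀ U V : Finset E, f (U ∪ V) + f (U ∩ V) ≤ f U + f V) (x : E → ℕ)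
    (hx : x ∈ Base f d) (U V : Finset E) (hU : ∑ i ∈ U, x i = f U) (hV : ∑ i ∈ V, x i = f V) :
    ∑ i ∈ U ∪ V, x i = f (U ∪ V) ∧ ∑ i ∈ U ∩ V, x i = f (U ∩ V) := by
  have h1 := hsub U V
  have h2 := Finset.sum_union_inter (s₁ := U) (s₂ := V) (f := x)
  have h3 := hx.1 (U ∪ V)
  have h4 := hx.1 (U ∩ V)
  omega

lemma exchange {E : Type*} [Fintype E] [DecidableEq E] (f : Finset E → ℕ) (d : ℕ)
    (h0 : f ∅ = 0) (hd : f Finset.univ = d)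
    (hsub : ∀ U V : Finset E, f (U ∪ V) + f (U ∩ V) ≤ f U + f V) (x y : E → ℕ)
    (hx : x ∈ Base f d) (hy : y ∈ Base f d) (e : E) (he : y e < x e) :
    ∃ g, x g < y g ∧ x + chi g - chi e ∈ Base f d ∧ y + chi e - chi g ∈ Base f d := by
  classical
  let T : Finset E :=
    (Finset.univ.filter fun U : Finset E => e ∈ U ∧ ∑ i ∈ U, y i = f U).inf id
  let S : Finset E :=
    (Finset.univ.filter fun U : Finset E => e ∉ U ∧ ∑ i ∈ U, x i = f U).sup id
  have hT : e ∈ T ∧ ∑ i ∈ T, y i = f T := by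
    refine Finset.inf_induction (p := fun U : Finset E => e ∈ U ∧ ∑ i ∈ U, y i = f U) ?_ ?_ ?_
    · exact ⟨Finset.mem_univ _, by rw [Finset.top_eq_univ, hd]; exact hy.2⟩
    · rintro a ⟨ha, ha'⟩ b ⟨hb, hb'⟩
      exact ⟨Finset.mem_inter.2 ⟨ha, hb⟩, (tight_closed f d hsub y hy a b ha' hb').2⟩
    · intro b hb
      exact (Finset.mem_filter.1 hb).2
  have hS : e ∉ S ∧ ∑ i ∈ S, x i = f S := by
    refine Finset.sup_induction (p := fun U : Finset E => e ∉ U ∧ ∑ i ∈ U, x i = f U) ?_ ?_ ?_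
    · exact ⟨by simp, by simp [h0]⟩
    · rintro a ⟨ha, ha'⟩ b ⟨hb, hb'⟩
      refine ⟨fun h => ?_, (tight_closed f d hsub x hx a b ha' hb').1⟩
      rcases Finset.mem_union.1 h with h | h
      · exact ha h
      · exact hb h
    · intro b hb
      exact (Finset.mem_filter.1 hb).2
  have hTle : ∀ U : Finset E, e ∈ U → ∑ i ∈ U, y i = f U → T ⊆ U := fun U h1 h2 =>
    Finset.inf_le (f := id) (Finset.mem_filter.2 ⟨Finset.mem_univ U, h1, h2⟩)
  have hSle : ∀ U : Finset E, e ∉ U → ∑ i ∈ U, x i = f U → U ⊆ S := fun U h1 h2 =>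
    Finset.le_sup (f := id) (Finset.mem_filter.2 ⟨Finset.mem_univ U, h1, h2⟩)
  have key : ∃ g ∈ T \ S, x g < y g := by
    by_contra hcon
    push Not at hcon
    have hlt : ∑ i ∈ T \ S, y i < ∑ i ∈ T \ S, x i :=
      Finset.sum_lt_sum hcon ⟨e, Finset.mem_sdiff.2 ⟨hT.1, hS.1⟩, he⟩
    have h1 := hsub S T
    have h2 := hx.1 (S ∪ T)
    have h3 := hy.1 (S ∩ T)
    have h4 : ∑ i ∈ S ∪ T, x i = ∑ i ∈ S, x i + ∑ i ∈ T \ S, x i := by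
      rw [← Finset.union_sdiff_self_eq_union, Finset.sum_union Finset.disjoint_sdiff]
    have h5 : ∑ i ∈ S ∩ T, y i + ∑ i ∈ T \ S, y i = ∑ i ∈ T, y i := by
      rw [Finset.inter_comm]
      exact Finset.sum_inter_add_sum_sdiff T S y
    have := hT.2
    have := hS.2
    omega
  obtain ⟨g, hg, hlt⟩ := key
  obtain ⟨hgT, hgS⟩ := Finset.mem_sdiff.1 hg
  have hge : g ≠ e := by
    rintro rfl
    omega
  refine ⟨g, hlt, ?_, ?_⟩
  · exact move_mem f d x hx e g (by omega) hge fun U h1 h2 h3 => hgS (hSle U h2 h3 h1)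
  · exact move_mem f d y hy g e (by omega) hge.symm fun U h1 h2 h3 => h2 (hTle U h1 h3 hgT)

lemma base_trunc {E : Type*} [Fintype E] [DecidableEq E] (f : Finset E → ℕ) (d : ℕ) :
    Base (fun U => min (f U) d) d = Base f d := by
  ext x
  constructor
  · rintro ⟨h1, h2⟩
    exact ⟨fun U => (h1 U).trans (min_le_left _ _), h2⟩
  · rintro ⟨h1, h2⟩
    refine ⟨fun U => le_min (h1 U) ?_, h2⟩
    rw [← h2]
    exact Finset.sum_le_sum_of_subset (Finset.subset_univ U)

lemma exchange_base {E : Type*} [Fintype E] [DecidableEq E] (f : Finset E → ℕ) (d : ℕ)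
    (hf : IsPolymatroidRank f) (x y : E → ℕ)
    (hx : x ∈ Base f d) (hy : y ∈ Base f d) (e : E) (he : y e < x e) :
    ∃ g, x g < y g ∧ x + chi g - chi e ∈ Base f d ∧ y + chi e - chi g ∈ Base f d := by
  obtain ⟨h0, hmono, hsub⟩ := hf
  have hd : d ≤ f Finset.univ := by
    have := hx.1 Finset.univ
    rwa [hx.2] at this
  rw [← base_trunc] at hx hy ⊢
  refine exchange _ d (by simp [h0]) (by simp [hd]) (fun U V => ?_) x y hx hy e he
  have h1 := hsub U V
  have h2 := hmono U (U ∪ V) Finset.subset_union_left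
  have h3 := hmono V (U ∪ V) Finset.subset_union_right
  have h4 := hmono (U ∩ V) U Finset.inter_subset_left
  have h5 := hmono (U ∩ V) V Finset.inter_subset_right
  omega

lemma cost_move {E : Type*} [Fintype E] [DecidableEq E] (C : E → ℕ → ℕ → ℝ) (t x : E → ℕ)
    (e g : E) (hge : g ≠ e) :
    totalCost C t (x + chi g - chi e) = totalCost C t x
      + (C g (x g + 1) (t g) - C g (x g) (t g)) - (C e (x e) (t e) - C e (x e - 1) (t e)) := by
  have h : ∀ i, C i ((x + chi g - chi e) i) (t i) = C i (x i) (t i)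
      + (if i = g then C i (x i + 1) (t i) - C i (x i) (t i) else 0)
      - (if i = e then C i (x i) (t i) - C i (x i - 1) (t i) else 0) := by
    intro i
    simp only [Pi.sub_apply, Pi.add_apply, chi]
    by_cases hi : i = e
    · subst hi
      simp [hge.symm]
    · by_cases hi' : i = g
      · simp [hi, hi', hge]
      · simp [hi, hi']
  unfold totalCost
  rw [Finset.sum_congr rfl fun i _ => h i, Finset.sum_sub_distrib, Finset.sum_add_distrib]
  simp

lemma slope_mono (c : ℕ → ℝ) (hc : ∀ x, 1 ≤ x → c x - c (x - 1) ≤ c (x + 1) - c x) (a b : ℕ)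
    (hab : a < b) : c (a + 1) - c a ≤ c b - c (b - 1) := by
  induction b, hab using Nat.le_induction with
  | base => simp
  | succ n hn ih =>
    have := hc n (by omega)
    simp only [Nat.add_sub_cancel]
    linarith

/-- **Fujishige's optimality criterion.** For an integral polymatroid rank function `f`,
nonnegative cost functions `C_e` that are discrete convex in the first argument,
`t ∈ ℕ^E` and `d ∈ ℕ`, a point `x* ∈ B_f(d)` minimizes `Σ_e C_e(x_e;t_e)` over `B_f(d)`
iff for every `e` with `x*_e ≥ 1` and every `g ≠ e` with `x* + χ_g - χ_e ∈ B_f(d)` one has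
`C_e⁻(x*_e;t_e) ≤ C_g⁺(x*_g;t_g)`. -/
theorem fujishige_optimality {E : Type*} [Fintype E] [DecidableEq E] [Nonempty E]
    (f : Finset E → ℕ) (hf : IsPolymatroidRank f)
    (C : E → ℕ → ℕ → ℝ) (hC0 : ∀ e x t, 0 ≤ C e x t)
    (hconv : ∀ e x t, 1 ≤ x → C e x t - C e (x - 1) t ≤ C e (x + 1) t - C e x t)
    (t : E → ℕ) (d : ℕ) (xs : E → ℕ) (hxs : xs ∈ Base f d) :
    IsOptimal f C t d xs ↔
      (∀ e, 1 ≤ xs e → ∀ g, g ≠ e → xs + chi g - chi e ∈ Base f d →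
        C e (xs e) (t e) - C e (xs e - 1) (t e) ≤
          C g (xs g + 1) (t g) - C g (xs g) (t g)) := by
  constructor
  · rintro ⟨_, hopt⟩ e he g hge hmem
    have h1 := hopt _ hmem
    rw [cost_move C t xs e g hge] at h1
    linarith
  · intro hloc
    refine ⟨hxs, ?_⟩
    suffices H : ∀ n : ℕ, ∀ y ∈ Base f d, ∑ i, (xs i - y i) = n →
        totalCost C t xs ≤ totalCost C t y from fun y hy => H _ y hy rfl
    intro n
    induction n with
    | zero =>
      intro y hy hn
      have hle : ∀ i ∈ Finset.univ, xs i ≤ y i := fun i hi => by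
        have := (Finset.sum_eq_zero_iff.1 hn) i hi
        omega
      have heq := (Finset.sum_eq_sum_iff_of_le hle).1 (hxs.2.trans hy.2.symm)
      have : xs = y := funext fun i => heq i (Finset.mem_univ i)
      rw [this]
    | succ n ih =>
      intro y hy hn
      obtain ⟨e, -, he⟩ := Finset.exists_ne_zero_of_sum_ne_zero (by omega : ∑ i, (xs i - y i) ≠ 0)
      have he' : y e < xs e := by omega
      obtain ⟨g, hg, hx', hy'⟩ := exchange_base f d hf xs y hxs hy e he'
      have hge : g ≠ e := by
        rintro rfl
        omega
      have hl := hloc e (by omega) g hge hx'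
      have s1 := slope_mono (fun x => C e x (t e)) (fun x hx => hconv e x (t e) hx) _ _ he'
      have s2 := slope_mono (fun x => C g x (t g)) (fun x hx => hconv g x (t g) hx) _ _ hg
      have hcost := cost_move C t y g e hge.symm
      have hdist : ∑ i, (xs i - (y + chi e - chi g) i) = n := by
        have : ∑ i, (xs i - (y + chi e - chi g) i) + ∑ i, (if i = e then 1 else 0)
            = ∑ i, (xs i - y i) := by
          rw [← Finset.sum_add_distrib]
          refine Finset.sum_congr rfl fun i _ => ?_
          simp only [Pi.sub_apply, Pi.add_apply, chi]
          by_cases hi : i = e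
          · subst hi
            simp [hge.symm]
            omega
          · by_cases hi' : i = g
            · subst hi'
              simp [hi]
              omega
            · simp [hi, hi']
        simp at this hn ⊢
        omega
      have := ih _ hy' hdist
      linarith
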